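/- In H(n,k,p_n) with λ_n = log n + c for fixed c ∈ ℝ, the number of isolated vertices I_n converges in distribution to a Poisson random variable with mean e^{−c}, and consequently X_0 = C(I_n,2) converges in distribution to C(Z,2) with Z ∼ Poisson(e^{−c}). -/

import Mathlib

/-- All `k`-element subsets of `[n]`, the possible hyperedges of a `k`-uniform
hypergraph on `n` vertices. -/
def kSets (n k : ℕ) : Finset (Finset (Fin n)) :=
  (Finset.univ : Finset (Fin n)).powersetCard k

/-- The probability, in the random hypergraph `H(n,k,p)` where each `k`-subset is a
hyperedge independently with probability `p`, of a given edge set `E`. -/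
noncomputable def hweight (n k : ℕ) (p : ℝ) (E : Finset (Finset (Fin n))) : ℝ :=
  if E ⊆ kSets n k then p ^ E.card * (1 - p) ^ ((kSets n k).card - E.card) else 0

open Classical in
/-- The probability of an event `A` under `H(n,k,p)`. -/
noncomputable def hprob (n k : ℕ) (p : ℝ) (A : Finset (Finset (Fin n)) → Prop) : ℝ :=
  ∑ E : Finset (Finset (Fin n)), if A E then hweight n k p E else 0

/-- The expectation of a random variable `f` under `H(n,k,p)`. -/
noncomputable def hexp (n k : ℕ) (p : ℝ) (f : Finset (Finset (Fin n)) → ℝ) : ℝ :=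
  ∑ E : Finset (Finset (Fin n)), hweight n k p E * f E

/-- The star of a vertex `v`: the set of hyperedges of `E` containing `v`. -/
def hstar {n : ℕ} (E : Finset (Finset (Fin n))) (v : Fin n) : Finset (Finset (Fin n)) :=
  E.filter (fun e => v ∈ e)

/-- `X_r`: the number of unordered pairs of (distinct) vertices with identical stars of
size exactly `r` (star-collisions of support size `r`). -/
def Xr (n r : ℕ) (E : Finset (Finset (Fin n))) : ℕ :=
  ((Finset.univ : Finset (Fin n)).powersetCard 2 |>.filter
    (fun P => (∀ u ∈ P, ∀ v ∈ P, hstar E u = hstar E v) ∧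
      ∀ u ∈ P, (hstar E u).card = r)).card

open Filter

/-- The number of isolated vertices (vertices with empty star). -/
def isolatedCount {n : ℕ} (E : Finset (Finset (Fin n))) : ℕ :=
  ((Finset.univ : Finset (Fin n)).filter (fun v => hstar E v = ∅)).card

/-!
The binomial moment `E[C(Iₙ, r)]` is the sum, over the `r`-sets `S` of vertices, of the
probability that none of the `N = C(n, k) - C(n - r, k)` possible hyperedges meeting `S` is present,
that is `C(n, r) * (1 - pₙ) ^ N`. Since any two vertices have expected codegree
`C(n - 2, k - 2) * pₙ = O(λₙ / n)`, few hyperedges meet `S` twice and `N * pₙ = r * λₙ + o(1)`, so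
the moment tends to `e^(-c r) / r!`, the `r`-th binomial moment of `Poisson(e^(-c))`. The Bonferroni
inequalities recover the point probabilities from the binomial moments.
-/

section BinomialMoments

open Finset Topology

variable {Ω : Type*} [Fintype Ω]

/-- The `r`-th binomial moment `E[C(X, r)]` of `X : Ω → ℕ`, where the expectation is the sum over
the finite type `Ω` with weights `w`. The weights need not add up to one. -/
noncomputable def binomialMoment (w : Ω → ℝ) (X : Ω → ℕ) (r : ℕ) : ℝ :=
  ∑ ω, w ω * (X ω).choose r

lemma binomialMoment_card {α : Type*} [Fintype α] [DecidableEq α] (w : Ω → ℝ) (F : Ω → Finset α)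
    (r : ℕ) :
    binomialMoment w (fun ω : Ω => #(F ω)) r =
      ∑ S ∈ (univ : Finset α).powersetCard r, ∑ ω with S ⊆ F ω, w ω := by
  simp only [binomialMoment, sum_filter]
  rw [sum_comm]
  refine sum_congr rfl fun ω _ => ?_
  have hfilter : {S ∈ (univ : Finset α).powersetCard r | S ⊆ F ω} = (F ω).powersetCard r := by
    ext S
    simp [mem_powersetCard, and_comm]
  rw [← sum_filter, hfilter, sum_const, card_powersetCard, nsmul_eq_mul, mul_comm]

lemma choose_add_mul_choose (x m i : ℕ) :
    (m + i).choose m * x.choose (m + i) = x.choose m * (x - m).choose i := by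
  rw [mul_comm, Nat.choose_mul (Nat.le_add_right m i), Nat.add_sub_cancel_left]

lemma abs_ite_eq_zero_sub_alternating_sum_choose_le (y j : ℕ) :
    |(if y = 0 then (1 : ℝ) else 0) - ∑ i ∈ range (j + 1), (-1) ^ i * (y.choose i : ℝ)| ≤
      y.choose j := by
  rcases y with _ | y
  · simp [sum_range_succ']
  · have hsum : ∑ i ∈ range (j + 1), (-1 : ℝ) ^ i * ((y + 1).choose i : ℝ) =
        (-1) ^ j * y.choose j := by
      exact_mod_cast Int.alternating_sum_range_choose_eq_choose (n := y) (m := j)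
    rw [hsum, if_neg y.succ_ne_zero, zero_sub, abs_neg, abs_mul, abs_neg_one_pow, one_mul,
      Nat.abs_cast]
    exact_mod_cast Nat.choose_le_choose j y.le_succ

lemma abs_ite_eq_sub_alternating_sum_choose_le (x m j : ℕ) :
    |(if x = m then (1 : ℝ) else 0) -
        ∑ i ∈ range (j + 1), (-1) ^ i * ((m + i).choose m * (x.choose (m + i) : ℝ))| ≤
      (m + j).choose m * (x.choose (m + j) : ℝ) := by
  have hmul (i : ℕ) : ((m + i).choose m * x.choose (m + i) : ℝ) =
      x.choose m * (x - m).choose i := mod_cast choose_add_mul_choose x m i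
  have hite : (if x = m then (1 : ℝ) else 0) = x.choose m * if x - m = 0 then 1 else 0 := by
    rcases lt_trichotomy x m with h | rfl | h
    · simp [h.ne, Nat.choose_eq_zero_of_lt h]
    · simp
    · simp [h.ne', (Nat.sub_pos_of_lt h).ne']
  simp only [hmul, hite, mul_left_comm _ (x.choose m : ℝ), ← mul_sum, ← mul_sub, abs_mul,
    Nat.abs_cast]
  gcongr
  exact abs_ite_eq_zero_sub_alternating_sum_choose_le _ j

lemma abs_sum_sub_alternating_sum_binomialMoment_le {w : Ω → ℝ} (hw : ∀ ω, 0 ≤ w ω) (X : Ω → ℕ)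
    (m j : ℕ) :
    |∑ ω with X ω = m, w ω -
        ∑ i ∈ range (j + 1), (-1) ^ i * ((m + i).choose m * binomialMoment w X (m + i))| ≤
      (m + j).choose m * binomialMoment w X (m + j) := by
  calc
    _ = |∑ ω, w ω * ((if X ω = m then 1 else 0) - ∑ i ∈ range (j + 1),
          (-1) ^ i * ((m + i).choose m * ((X ω).choose (m + i) : ℝ)))| := by
      simp only [binomialMoment, mul_sub, sum_sub_distrib, mul_ite, mul_one, mul_zero,
        ← sum_filter, mul_sum, mul_left_comm (w _)]
      rw [sum_comm]
    _ ≤ ∑ ω, w ω * ((m + j).choose m * ((X ω).choose (m + j) : ℝ)) := by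
      refine (abs_sum_le_sum_abs _ _).trans (sum_le_sum fun ω _ => ?_)
      rw [abs_mul, abs_of_nonneg (hw ω)]
      exact mul_le_mul_of_nonneg_left (abs_ite_eq_sub_alternating_sum_choose_le _ m j) (hw ω)
    _ = _ := by simp only [binomialMoment, mul_sum, mul_left_comm (w _)]

lemma tendsto_of_abs_sub_le {ι κ : Type*} {l : Filter ι} {l' : Filter κ} [l'.NeBot] {a : ι → ℝ}
    {S T : κ → ι → ℝ} {s t : κ → ℝ} {L : ℝ} (h : ∀ j, ∀ᶠ i in l, |a i - S j i| ≤ T j i)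
    (hS : ∀ j, Tendsto (S j) l (𝓝 (s j))) (hT : ∀ j, Tendsto (T j) l (𝓝 (t j)))
    (hs : Tendsto s l' (𝓝 L)) (ht : Tendsto t l' (𝓝 0)) : Tendsto a l (𝓝 L) := by
  rw [Metric.tendsto_nhds]
  intro ε hε
  have hlim : Tendsto (fun j => t j + |s j - L|) l' (𝓝 0) := by
    simpa using ht.add (hs.sub_const L).abs
  obtain ⟨j, hj⟩ := (hlim.eventually_lt_const hε).exists
  filter_upwards [h j, ((hT j).add ((hS j).sub_const L).abs).eventually_lt_const hj] with i hi hi'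
  exact (abs_sub_le (a i) (S j i) L).trans_lt ((add_le_add_left hi _).trans_lt hi')

lemma choose_mul_pow_div_factorial (μ : ℝ) (m i : ℕ) :
    ((m + i).choose m : ℝ) * (μ ^ (m + i) / (m + i).factorial) =
      μ ^ m / m.factorial * (μ ^ i / i.factorial) := by
  have := (m + i).factorial_ne_zero
  rw [Nat.cast_add_choose, pow_add]
  field_simp

lemma tendsto_sum_alternating_poisson (μ : ℝ) (m : ℕ) :
    Tendsto (fun j => ∑ i ∈ range (j + 1), (-1) ^ i *
        ((m + i).choose m * (μ ^ (m + i) / (m + i).factorial))) atTop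
      (𝓝 (Real.exp (-μ) * μ ^ m / m.factorial)) := by
  have hexp := ((NormedSpace.expSeries_div_hasSum_exp (-μ)).tendsto_sum_nat.comp
    (tendsto_add_atTop_nat 1)).mul_const (μ ^ m / m.factorial)
  rw [← Real.exp_eq_exp_ℝ, ← mul_div_assoc] at hexp
  refine hexp.congr fun j => ?_
  rw [Function.comp, sum_mul]
  refine sum_congr rfl fun i _ => ?_
  rw [choose_mul_pow_div_factorial, neg_pow]
  ring

theorem tendsto_poisson_of_tendsto_binomialMoment {ι : Type*} {l : Filter ι} {Ω : ι → Type*}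
    [∀ i, Fintype (Ω i)] {w : ∀ i, Ω i → ℝ} {X : ∀ i, Ω i → ℕ} {μ : ℝ}
    (hw : ∀ᶠ i in l, ∀ ω, 0 ≤ w i ω)
    (hX : ∀ r, Tendsto (fun i => binomialMoment (w i) (X i) r) l (𝓝 (μ ^ r / r.factorial)))
    (m : ℕ) :
    Tendsto (fun i => ∑ ω with X i ω = m, w i ω) l
      (𝓝 (Real.exp (-μ) * μ ^ m / m.factorial)) := by
  refine tendsto_of_abs_sub_le
    (fun j => hw.mono fun i hi => abs_sum_sub_alternating_sum_binomialMoment_le hi (X i) m j)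
    (fun j => tendsto_finsetSum _ fun i _ => ((hX (m + i)).const_mul _).const_mul _)
    (fun j => (hX (m + j)).const_mul _) (tendsto_sum_alternating_poisson μ m) ?_
  simp only [choose_mul_pow_div_factorial]
  simpa using (FloorSemiring.tendsto_pow_div_factorial_atTop μ).const_mul (μ ^ m / m.factorial)

end BinomialMoments

section RandomHypergraph

open Finset Topology

variable {n k : ℕ} {p : ℝ}

lemma hweight_nonneg (h0 : 0 ≤ p) (h1 : p ≤ 1) (E : Finset (Finset (Fin n))) :
    0 ≤ hweight n k p E := by
  have := sub_nonneg.2 h1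
  unfold hweight
  split_ifs <;> positivity

lemma hprob_congr {A B : Finset (Finset (Fin n)) → Prop}
    (h : ∀ E, E ⊆ kSets n k → (A E ↔ B E)) : hprob n k p A = hprob n k p B := by
  unfold hprob
  refine sum_congr rfl fun E _ => ?_
  by_cases hE : E ⊆ kSets n k
  · rw [propext (h E hE)]
  · simp only [hweight, if_neg hE, ite_self]

lemma hprob_eq_sum_filter (A : Finset (Finset (Fin n)) → Prop) [DecidablePred A] :
    hprob n k p A = ∑ E with A E, hweight n k p E := by
  rw [sum_filter, hprob]
  exact sum_congr rfl fun E _ => by congr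

lemma hprob_subset {K : Finset (Finset (Fin n))} (hK : K ⊆ kSets n k) :
    hprob n k p (fun E => E ⊆ K) = (1 - p) ^ (#(kSets n k) - #K) := by
  have hweight_eq (E) (hE : E ∈ K.powerset) : hweight n k p E =
      p ^ #E * (1 - p) ^ (#K - #E) * (1 - p) ^ (#(kSets n k) - #K) := by
    rw [mem_powerset] at hE
    rw [hweight, if_pos (hE.trans hK), mul_assoc, ← pow_add, add_comm,
      Nat.sub_add_sub_cancel (card_le_card hK) (card_le_card hE)]
  rw [hprob_eq_sum_filter, filter_subset_univ, sum_congr rfl hweight_eq, ← sum_mul,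
    sum_pow_mul_eq_add_pow, add_sub_cancel, one_pow, one_mul]

/-- The set of isolated vertices of the hypergraph with edge set `E`. Working with the set, rather
than with its cardinality `isolatedCount E`, is what makes `binomialMoment_card` applicable. -/
def isolatedSet (E : Finset (Finset (Fin n))) : Finset (Fin n) := {v | hstar E v = ∅}

lemma isolatedCount_eq_card (E : Finset (Finset (Fin n))) : isolatedCount E = #(isolatedSet E) :=
  rfl

lemma subset_isolatedSet_iff {E : Finset (Finset (Fin n))} (hE : E ⊆ kSets n k)
    (S : Finset (Fin n)) : S ⊆ isolatedSet E ↔ E ⊆ Sᶜ.powersetCard k := by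
  have hcard (e) (he : e ∈ E) : #e = k := (mem_powersetCard.1 (hE he)).2
  simp only [isolatedSet, hstar, subset_iff, mem_filter_univ, filter_eq_empty_iff,
    mem_powersetCard, mem_compl]
  exact ⟨fun h e he => ⟨fun v hv hvS => h hvS he hv, hcard e he⟩,
    fun h v hvS e he hv => (h he).1 hv hvS⟩

lemma hprob_subset_isolatedSet (S : Finset (Fin n)) :
    hprob n k p (fun E => S ⊆ isolatedSet E) = (1 - p) ^ (n.choose k - (n - #S).choose k) := by
  rw [hprob_congr fun E hE => subset_isolatedSet_iff hE S,
    hprob_subset (powersetCard_mono (subset_univ _))]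
  simp [kSets, card_compl]

lemma binomialMoment_isolatedCount (r : ℕ) :
    binomialMoment (hweight n k p) isolatedCount r =
      n.choose r * (1 - p) ^ (n.choose k - (n - r).choose k) := by
  have hsum := binomialMoment_card (hweight n k p) isolatedSet r
  simp only [← hprob_eq_sum_filter, hprob_subset_isolatedSet] at hsum
  rw [funext isolatedCount_eq_card, hsum,
    sum_congr rfl fun S hS => by rw [(mem_powersetCard.1 hS).2]]
  simp

lemma Xr_zero_eq_choose (E : Finset (Finset (Fin n))) :
    Xr n 0 E = (isolatedCount E).choose 2 := by
  rw [isolatedCount_eq_card, ← card_powersetCard, Xr]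
  congr 1
  ext P
  simp only [mem_filter, mem_powersetCard, card_eq_zero, isolatedSet, subset_iff, mem_univ,
    true_and, implies_true]
  exact ⟨fun h => ⟨h.2.2, h.1⟩,
    fun h => ⟨h.2, fun u hu v hv => (h.1 _ hu).trans (h.1 _ hv).symm, h.1⟩⟩

lemma hprob_comp_eq_sum (f : Finset (Finset (Fin n)) → ℕ) {g : ℕ → ℕ} {m : ℕ} {s : Finset ℕ}
    (hs : ∀ z, g z = m → z ∈ s) :
    hprob n k p (fun E => g (f E) = m) =
      ∑ z ∈ s, if g z = m then hprob n k p (fun E => f E = z) else 0 := by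
  have hmaps : ∀ E ∈ ({E | g (f E) = m} : Finset (Finset (Finset (Fin n)))),
      f E ∈ ({z ∈ s | g z = m} : Finset ℕ) := by
    simpa using fun E hE => ⟨hs _ hE, hE⟩
  simp only [hprob_eq_sum_filter, ← sum_filter (fun z => g z = m)]
  rw [← sum_fiberwise_of_maps_to hmaps]
  refine sum_congr rfl fun z hz => sum_congr ?_ fun _ _ => rfl
  rw [filter_filter]
  exact filter_congr fun E _ => and_iff_right_of_imp fun h => h ▸ (mem_filter.1 hz).2

lemma tendsto_hprob_comp {p : ℕ → ℝ} {f : ∀ n, Finset (Finset (Fin n)) → ℕ} {a : ℕ → ℝ}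
    (hf : ∀ z, Tendsto (fun n => hprob n k (p n) (fun E => f n E = z)) atTop (𝓝 (a z)))
    {g : ℕ → ℕ} {m : ℕ} (hg : {z | g z = m}.Finite) :
    Tendsto (fun n => hprob n k (p n) (fun E => g (f n E) = m)) atTop
      (𝓝 (∑' z, if g z = m then a z else 0)) := by
  have hs (z) (hz : g z = m) : z ∈ hg.toFinset := hg.mem_toFinset.2 hz
  have hsum (n) := hprob_comp_eq_sum (k := k) (p := p n) (f n) hs
  rw [funext hsum, tsum_eq_sum fun z hz => if_neg fun h => hz (hs z h)]
  refine tendsto_finsetSum _ fun z _ => ?_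
  split_ifs
  exacts [hf z, tendsto_const_nhds]

lemma finite_setOf_choose_two_eq (m : ℕ) : {z : ℕ | z.choose 2 = m}.Finite := by
  refine (Set.finite_Iic (m + 1)).subset fun z hz => ?_
  rcases z with _ | z
  · exact Nat.zero_le _
  · rw [Set.mem_ofPred_eq, Nat.choose_succ_succ, Nat.choose_one_right] at hz
    exact Nat.succ_le_succ (by omega)

end RandomHypergraph

section CriticalWindow

open Asymptotics Topology

lemma isBigO_log_one_sub_add_self :
    (fun x : ℝ => Real.log (1 - x) + x) =O[𝓝 0] fun x => x ^ 2 := by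
  refine IsBigO.of_bound 2 ?_
  filter_upwards [Metric.ball_mem_nhds (0 : ℝ) (half_pos one_pos)] with x hx
  rw [Metric.mem_ball, dist_zero_right, Real.norm_eq_abs] at hx
  have htaylor : |x + Real.log (1 - x)| ≤ x ^ 2 / (1 - |x|) := by
    simpa [one_add_one_eq_two] using
      Real.abs_log_sub_add_sum_range_le (hx.trans one_half_lt_one) 1
  rw [Real.norm_eq_abs, Real.norm_eq_abs, abs_sq, add_comm]
  refine htaylor.trans ?_
  rw [div_le_iff₀ (by linarith)]
  nlinarith [sq_nonneg x]

lemma tendsto_one_sub_pow_mul_exp {ι : Type*} {l : Filter ι} {p : ι → ℝ} {N : ι → ℕ}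
    (hp : Tendsto p l (𝓝 0)) (hN : Tendsto (fun i => N i * p i ^ 2) l (𝓝 0)) :
    Tendsto (fun i => (1 - p i) ^ N i * Real.exp (N i * p i)) l (𝓝 1) := by
  have hlog : Tendsto (fun i => N i * (Real.log (1 - p i) + p i)) l (𝓝 0) :=
    ((isBigO_refl (fun i => (N i : ℝ)) l).mul
      (isBigO_log_one_sub_add_self.comp_tendsto hp)).trans_tendsto hN
  refine (Real.exp_zero ▸ (Real.continuous_exp.tendsto 0).comp hlog).congr' ?_
  filter_upwards [hp.eventually_lt_const one_pos] with i hi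
  rw [Function.comp, mul_add, Real.exp_add, Real.exp_nat_mul, Real.exp_log (sub_pos.2 hi)]

-- The hypergraphs here are `(k + 2)`-uniform: `C(n - 1, k + 1) pₙ` is the expected degree `λₙ`, and
-- `C(n - 2, k) pₙ` the expected number of hyperedges containing two given vertices.
variable {k : ℕ} {c : ℝ} {p : ℕ → ℝ}

lemma tendsto_choose_sub_choose_mul
    (hD : Tendsto (fun n => ((n - 2).choose k : ℝ) * p n) atTop (𝓝 0)) (i : ℕ) :
    Tendsto (fun n => (((n - 1).choose (k + 1) : ℝ) - (n - 1 - i).choose (k + 1)) * p n) atTop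
      (𝓝 0) := by
  induction i with
  | zero => simp
  | succ i ih =>
    have hstep : Tendsto (fun n => ((n - 2 - i).choose k : ℝ) * p n) atTop (𝓝 0) := by
      refine squeeze_zero_norm (fun n => ?_) (tendsto_zero_iff_norm_tendsto_zero.1 hD)
      rw [norm_mul, norm_mul, Real.norm_natCast, Real.norm_natCast]
      gcongr ?_ * _
      exact_mod_cast Nat.choose_le_choose k (Nat.sub_le _ _)
    rw [← add_zero (0 : ℝ)]
    refine (ih.add hstep).congr' ?_
    filter_upwards [eventually_ge_atTop (i + 2)] with n hn
    obtain ⟨s, rfl⟩ := Nat.exists_eq_add_of_le' hn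
    rw [show s + (i + 2) - 1 - i = s + 1 by omega, show s + (i + 2) - 1 - (i + 1) = s by omega,
      show s + (i + 2) - 2 - i = s by omega, Nat.choose_succ_succ s k]
    push_cast
    ring

lemma tendsto_choose_sub_choose_mul_sub
    (hD : Tendsto (fun n => ((n - 2).choose k : ℝ) * p n) atTop (𝓝 0))
    (r : ℕ) :
    Tendsto (fun n => ((n.choose (k + 2) : ℝ) - (n - r).choose (k + 2)) * p n -
      r * ((n - 1).choose (k + 1) * p n)) atTop (𝓝 0) := by
  induction r with
  | zero => simp
  | succ r ih =>
    rw [← sub_zero (0 : ℝ)]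
    refine (ih.sub (tendsto_choose_sub_choose_mul hD r)).congr' ?_
    filter_upwards [eventually_ge_atTop (r + 1)] with n hn
    obtain ⟨s, rfl⟩ := Nat.exists_eq_add_of_le' hn
    rw [show s + (r + 1) - 1 - r = s by omega, show s + (r + 1) - r = s + 1 by omega,
      show s + (r + 1) - (r + 1) = s by omega, Nat.choose_succ_succ s (k + 1)]
    push_cast
    ring

lemma tendsto_atTop_of_tendsto_sub_log {L : ℕ → ℝ}
    (hL : Tendsto (fun n => L n - Real.log n) atTop (𝓝 c)) : Tendsto L atTop atTop := by
  simpa using hL.add_atTop (Real.tendsto_log_atTop.comp tendsto_natCast_atTop_atTop)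

lemma isLittleO_pow_of_tendsto_sub_log {L : ℕ → ℝ}
    (hL : Tendsto (fun n => L n - Real.log n) atTop (𝓝 c)) (j : ℕ) :
    (fun n => L n ^ j) =o[atTop] fun n => (n : ℝ) := by
  have hconst : (fun _ => 1 : ℕ → ℝ) =o[atTop] fun n => Real.log n :=
    Real.isLittleO_const_log_atTop.comp_tendsto tendsto_natCast_atTop_atTop
  have hlog : L =O[atTop] fun n => Real.log n := by
    simpa using ((hL.isBigO_one ℝ).trans hconst.isBigO).add (isBigO_refl _ _)
  exact (hlog.pow j).trans_isLittleO
    (Real.isLittleO_pow_log_id_atTop.comp_tendsto tendsto_natCast_atTop_atTop)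

lemma tendsto_degree_pow_mul_codegree
    (hlam : Tendsto (fun n => ((n - 1).choose (k + 1) : ℝ) * p n - Real.log n) atTop (𝓝 c))
    (j : ℕ) :
    Tendsto (fun n => (((n - 1).choose (k + 1) : ℝ) * p n) ^ j * ((n - 2).choose k * p n)) atTop
      (𝓝 0) := by
  have hlim := ((isLittleO_pow_of_tendsto_sub_log hlam (j + 1)).tendsto_div_nhds_zero.mul
    (tendsto_natCast_div_add_atTop (-1 : ℝ))).const_mul (k + 1 : ℝ)
  rw [zero_mul, mul_zero] at hlim
  refine hlim.congr' ?_
  filter_upwards [eventually_ge_atTop 2] with n hn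
  obtain ⟨s, rfl⟩ := Nat.exists_eq_add_of_le' hn
  have habsorb : ((s : ℝ) + 1) * s.choose k = (s + 1).choose (k + 1) * (k + 1) := by
    exact_mod_cast Nat.add_one_mul_choose_eq s k
  have hs : ((s + 2 : ℕ) : ℝ) + -1 ≠ 0 := by push_cast; linarith [s.cast_nonneg (α := ℝ)]
  rw [show s + 2 - 1 = s + 1 from rfl, Nat.add_sub_cancel]
  field_simp
  push_cast
  linear_combination -(((s + 1).choose (k + 1) : ℝ) ^ j * p (s + 2) ^ (j + 1)) * habsorb

lemma eventually_nonneg_of_tendsto_degree_sub_log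
    (hlam : Tendsto (fun n => ((n - 1).choose (k + 1) : ℝ) * p n - Real.log n) atTop (𝓝 c)) :
    ∀ᶠ n in atTop, 0 ≤ p n := by
  filter_upwards [(tendsto_atTop_of_tendsto_sub_log hlam).eventually_gt_atTop 0] with n hn
  exact (pos_of_mul_pos_right hn (Nat.cast_nonneg _)).le

lemma tendsto_degree_pow_mul
    (hlam : Tendsto (fun n => ((n - 1).choose (k + 1) : ℝ) * p n - Real.log n) atTop (𝓝 c))
    (j : ℕ) :
    Tendsto (fun n => (((n - 1).choose (k + 1) : ℝ) * p n) ^ j * p n) atTop (𝓝 0) := by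
  refine squeeze_zero' ?_ ?_ (tendsto_degree_pow_mul_codegree hlam j)
  · filter_upwards [eventually_nonneg_of_tendsto_degree_sub_log hlam] with n hn
    positivity
  · filter_upwards [eventually_nonneg_of_tendsto_degree_sub_log hlam, eventually_ge_atTop (k + 2)]
      with n hp hn
    have hpos : (1 : ℝ) ≤ (n - 2).choose k := mod_cast Nat.choose_pos (Nat.le_sub_of_add_le hn)
    gcongr
    exact le_mul_of_one_le_left hp hpos

lemma tendsto_zero_of_tendsto_degree_sub_log
    (hlam : Tendsto (fun n => ((n - 1).choose (k + 1) : ℝ) * p n - Real.log n) atTop (𝓝 c)) :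
    Tendsto p atTop (𝓝 0) := by
  simpa using tendsto_degree_pow_mul hlam 0

lemma tendsto_pow_mul_one_sub_pow
    (hlam : Tendsto (fun n => ((n - 1).choose (k + 1) : ℝ) * p n - Real.log n) atTop (𝓝 c))
    (r : ℕ) :
    Tendsto (fun n : ℕ => (n : ℝ) ^ r *
      (1 - p n) ^ (n.choose (k + 2) - (n - r).choose (k + 2))) atTop (𝓝 (Real.exp (-c) ^ r)) := by
  set N : ℕ → ℕ := fun n => n.choose (k + 2) - (n - r).choose (k + 2) with hN
  have hp := tendsto_zero_of_tendsto_degree_sub_log hlam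
  have hNp : Tendsto (fun n => N n * p n - r * ((n - 1).choose (k + 1) * p n)) atTop (𝓝 0) := by
    have hD := tendsto_degree_pow_mul_codegree hlam 0
    simp only [pow_zero, one_mul] at hD
    refine (tendsto_choose_sub_choose_mul_sub hD r).congr fun n => ?_
    rw [hN, Nat.cast_sub (Nat.choose_le_choose _ (Nat.sub_le n r))]
  have hNpp : Tendsto (fun n => N n * p n ^ 2) atTop (𝓝 0) := by
    have hlim := (hNp.mul hp).add ((tendsto_degree_pow_mul hlam 1).const_mul (r : ℝ))
    simp only [mul_zero, add_zero] at hlim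
    exact hlim.congr fun n => by ring
  have hexp : Tendsto (fun n => Real.exp (-(N n * p n - r * ((n - 1).choose (k + 1) * p n)) -
      r * ((n - 1).choose (k + 1) * p n - Real.log n))) atTop (𝓝 (Real.exp (-0 - r * c))) :=
    (Real.continuous_exp.tendsto _).comp (hNp.neg.sub (hlam.const_mul _))
  have hlim := (tendsto_one_sub_pow_mul_exp hp hNpp).mul hexp
  rw [one_mul, neg_zero, zero_sub, ← mul_neg, Real.exp_nat_mul] at hlim
  refine hlim.congr' ?_
  filter_upwards [eventually_gt_atTop 0] with n hn
  rw [mul_assoc, ← Real.exp_add, mul_comm]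
  congr 1
  rw [show ∀ a b d : ℝ, a + (-(a - r * b) - r * (b - d)) = r * d by intros; ring,
    Real.exp_nat_mul, Real.exp_log (Nat.cast_pos.2 hn)]

lemma tendsto_binomialMoment_isolatedCount
    (hlam : Tendsto (fun n => ((n - 1).choose (k + 1) : ℝ) * p n - Real.log n) atTop (𝓝 c))
    (r : ℕ) :
    Tendsto (fun n => binomialMoment (hweight n (k + 2) (p n)) isolatedCount r) atTop
      (𝓝 (Real.exp (-c) ^ r / r.factorial)) := by
  simp only [binomialMoment_isolatedCount]
  refine ((isEquivalent_choose r).mul IsEquivalent.refl).symm.tendsto_nhds ?_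
  refine ((tendsto_pow_mul_one_sub_pow hlam r).div_const _).congr fun n => ?_
  simp only [Pi.mul_apply, div_mul_eq_mul_div]

theorem tendsto_hprob_isolatedCount
    (hlam : Tendsto (fun n => ((n - 1).choose (k + 1) : ℝ) * p n - Real.log n) atTop (𝓝 c))
    (m : ℕ) :
    Tendsto (fun n => hprob n (k + 2) (p n) (fun E => isolatedCount E = m)) atTop
      (𝓝 (Real.exp (-Real.exp (-c)) * Real.exp (-c) ^ m / m.factorial)) := by
  have hw : ∀ᶠ n in atTop, ∀ E, 0 ≤ hweight n (k + 2) (p n) E := by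
    filter_upwards [eventually_nonneg_of_tendsto_degree_sub_log hlam,
      (tendsto_zero_of_tendsto_degree_sub_log hlam).eventually_le_const one_pos]
      with n h0 h1 using hweight_nonneg h0 h1
  simp only [hprob_eq_sum_filter]
  exact tendsto_poisson_of_tendsto_binomialMoment hw (tendsto_binomialMoment_isolatedCount hlam) m

end CriticalWindow

theorem stmt15_general (k : ℕ) (hk : 2 ≤ k) (c : ℝ) (p : ℕ → ℝ)
    (hlam : Tendsto (fun n => ((n - 1).choose (k - 1) : ℝ) * p n - Real.log n) atTop (nhds c)) :
    (∀ m : ℕ,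
      Tendsto (fun n => hprob n k (p n) (fun E => isolatedCount E = m)) atTop
        (nhds (Real.exp (-Real.exp (-c)) * Real.exp (-c) ^ m / m.factorial)))
    ∧ (∀ m : ℕ,
      Tendsto (fun n => hprob n k (p n) (fun E => Xr n 0 E = m)) atTop
        (nhds (∑' z : ℕ, if z.choose 2 = m then
          Real.exp (-Real.exp (-c)) * Real.exp (-c) ^ z / z.factorial else 0))) := by
  obtain ⟨k, rfl⟩ := Nat.exists_eq_add_of_le' hk
  have hI := tendsto_hprob_isolatedCount hlam
  refine ⟨hI, fun m => ?_⟩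
  simp only [Xr_zero_eq_choose]
  exact tendsto_hprob_comp hI (finite_setOf_choose_two_eq m)

/-- In `H(n,k,p_n)` with `λ_n = log n + c`, the number `I_n` of isolated vertices
converges in distribution to `Poisson(e^{-c})`, and consequently `X_0 = C(I_n, 2)`
converges in distribution to `C(Z, 2)` with `Z ∼ Poisson(e^{-c})`. -/
theorem stmt15 (k : ℕ) (hk : 2 ≤ k) (c : ℝ) (p : ℕ → ℝ)
    (hp : ∀ᶠ n in atTop, 0 ≤ p n ∧ p n ≤ 1)
    (hlam : ∀ᶠ n in atTop, ((n - 1).choose (k - 1) : ℝ) * p n = Real.log n + c) :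
    (∀ m : ℕ,
      Tendsto (fun n => hprob n k (p n) (fun E => isolatedCount E = m)) atTop
        (nhds (Real.exp (-Real.exp (-c)) * Real.exp (-c) ^ m / m.factorial)))
    ∧ (∀ m : ℕ,
      Tendsto (fun n => hprob n k (p n) (fun E => Xr n 0 E = m)) atTop
        (nhds (∑' z : ℕ, if z.choose 2 = m then
          Real.exp (-Real.exp (-c)) * Real.exp (-c) ^ z / z.factorial else 0))) := by
  exact stmt15_general k hk c p <| tendsto_const_nhds.congr' <|
    hlam.mono fun n hn => by simp only [hn, add_sub_cancel_left]
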